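/- Let Z be a subset system, P a poset, and let δ(P) = k_Z(Γ^Z(P)) denote the poset, ordered by inclusion, of Z-compact elements of the complete lattice Γ^Z(P); for every p ∈ P the principal ideal ↓p belongs to δ(P). Then there exists a σ^Z-continuous map ξ : δ(P) → P with ξ(↓p) = p for every p ∈ P if and only if P is a δcpo, i.e., every A ∈ δ(P) has a supremum in P; and in that case ξ(A) = sup A for every A ∈ δ(P). -/

import Mathlib

/-!
The principal ideal `↓p` is `Z`-compact because the union of any `𝒜 ∈ Γ^Z(Γ^Z(P))` is again in
`Γ^Z(P)` (`sUnion_mem_GammaZ`): a set `S ∈ Z(P)` inside the union lifts to `{↓s : s ∈ S}`, which is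
in `Z(Γ^Z(P))` and lies in `𝒜`. If `↓p` is in the cut of `𝒜`, it therefore lies below the union,
so `p` belongs to a member of `𝒜`, and `↓p ∈ 𝒜` since `𝒜` is a lower set.

A `σ^Z`-continuous map is monotone. Comparing `A ∈ δ(P)` with the ideals `↓p ⊆ A` for `p ∈ A` and
with `A ⊆ ↓u` for upper bounds `u` of `A`, any monotone retraction `ξ` satisfies `ξ(A) = sup A`.
Conversely, if all these suprema exist, `A ↦ sup A` is left adjoint to `p ↦ ↓p`, and a left adjoint
maps the cut of `𝒮` into the cut of its image, so it is `σ^Z`-continuous.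
-/

open Set

/-- A subset system on the category of posets. -/
structure SubsetSystem : Type 1 where
  Z : ∀ (P : Type) [PartialOrder P], Set (Set P)
  singleton_mem : ∀ (P : Type) [PartialOrder P] (x : P), {x} ∈ Z P
  image_mem : ∀ (P : Type) [PartialOrder P] (Q : Type) [PartialOrder Q]
    (f : P → Q), Monotone f → ∀ S ∈ Z P, f '' S ∈ Z Q

/-- The cut operator `A^δ = A^{ul}`. -/
def cutOp {P : Type} [PartialOrder P] (A : Set P) : Set P :=
  lowerBounds (upperBounds A)

/-- The down-closure `↓A`. -/
def dSet {P : Type} [PartialOrder P] (A : Set P) : Set P := {p | ∃ a ∈ A, p ≤ a}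

/-- The up-closure `↑A`. -/
def uSet {P : Type} [PartialOrder P] (A : Set P) : Set P := {p | ∃ a ∈ A, a ≤ p}

/-- The subbasic open sets `σ^Z(P)`. -/
def sigmaZ (Z : SubsetSystem) (P : Type) [PartialOrder P] : Set (Set P) :=
  {U | ∀ S ∈ Z.Z P, (cutOp S ∩ U).Nonempty → (S ∩ U).Nonempty}

/-- The subbasic closed sets `Γ^Z(P)`. -/
def GammaZ (Z : SubsetSystem) (P : Type) [PartialOrder P] : Set (Set P) :=
  {A | ∀ S ∈ Z.Z P, S ⊆ A → cutOp S ⊆ A}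

/-- The closure `cl_{σ^Z(P)}(M)`. -/
def clZ (Z : SubsetSystem) {P : Type} [PartialOrder P] (M : Set P) : Set P :=
  ⋂₀ {A | A ∈ GammaZ Z P ∧ M ⊆ A}

/-- `P` is weakly meet `s_Z`-continuous. -/
def WMSZ (Z : SubsetSystem) (P : Type) [PartialOrder P] : Prop :=
  ∀ x : P, ∀ D ∈ Z.Z P, x ∈ cutOp D → x ∈ clZ Z (Set.Iic x ∩ dSet D)

/-- `A ≪_Z B`. -/
def wayBelowZ (Z : SubsetSystem) {P : Type} [PartialOrder P] (A B : Set P) : Prop :=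
  ∀ S ∈ Z.Z P, (cutOp S ∩ uSet B).Nonempty → (S ∩ uSet A).Nonempty

/-- `↟_Z x = {y : y ≪_Z x}`. -/
def ddArrow (Z : SubsetSystem) {P : Type} [PartialOrder P] (x : P) : Set P :=
  {y | wayBelowZ Z {y} {x}}

/-- `P` is weak `s_Z`-continuous. -/
def WeakSZCont (Z : SubsetSystem) (P : Type) [PartialOrder P] : Prop :=
  ∀ x : P, x ∈ cutOp (ddArrow Z x)

/-- `P` is `s_Z`-continuous. -/
def SZCont (Z : SubsetSystem) (P : Type) [PartialOrder P] : Prop :=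
  WeakSZCont Z P ∧ ∀ x : P, ∃ S ∈ Z.Z P, ddArrow Z x = dSet S

/-- `f` is `σ^Z`-continuous. -/
def SigmaZCont (Z : SubsetSystem) {P Q : Type} [PartialOrder P] [PartialOrder Q]
    (f : P → Q) : Prop :=
  ∀ A ∈ GammaZ Z Q, f ⁻¹' A ∈ GammaZ Z P

/-- The interior w.r.t. the subbasic opens `σ^Z(P)`. -/
def intZ (Z : SubsetSystem) {P : Type} [PartialOrder P] (A : Set P) : Set P :=
  ⋃₀ {U | U ∈ sigmaZ Z P ∧ U ⊆ A}

/-- `Fin P = {↑F : F ⊆_f P}` ordered by reverse inclusion. -/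
def FinP (P : Type) [PartialOrder P] : Type :=
  {A : Set P // ∃ F : Set P, F.Finite ∧ A = uSet F}

instance (P : Type) [PartialOrder P] : PartialOrder (FinP P) :=
  PartialOrder.lift (fun A => OrderDual.toDual A.1)
    (fun A B h => Subtype.ext (OrderDual.toDual.injective h))

/-- The set of minimal elements of `A`. -/
def minSet {P : Type} [PartialOrder P] (A : Set P) : Set P :=
  {x ∈ A | ∀ y ∈ A, y ≤ x → y = x}

/-- `ω_Z(x) = {F finite : F ≪_Z x}`. -/
def omegaZ (Z : SubsetSystem) {P : Type} [PartialOrder P] (x : P) : Set (Set P) :=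
  {F | F.Finite ∧ wayBelowZ Z F {x}}

/-- `P` is `s_Z`-quasicontinuous. -/
def SZQuasi (Z : SubsetSystem) (P : Type) [PartialOrder P] : Prop :=
  ∀ p : P,
    {A : FinP P | ∃ F ∈ omegaZ Z p, A.1 = uSet F} ∈ Z.Z (FinP P) ∧
    Set.Ici p = ⋂ F ∈ omegaZ Z p, uSet F

/-- `Z` has the Rudin property. -/
def RudinProp (Z : SubsetSystem) : Prop :=
  ∀ (P : Type) [PartialOrder P], ∀ E : Set P, IsUpperSet E →
    ∀ G ∈ Z.Z (FinP P), (∀ A ∈ G, A.1 ≠ (∅ : Set P)) →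
    (⋂ A ∈ G, A.1) ⊆ E →
    ∃ K : Set P,
      K ⊆ (⋃ A ∈ G, minSet A.1) ∧
      (∀ A ∈ G, (K ∩ minSet A.1).Nonempty) ∧
      K ∈ Z.Z P ∧
      (⋂ k ∈ K, Set.Ici k) ⊆ E ∧
      ∀ A ∈ G, ∀ B ∈ G, A.1 ⊆ B.1 →
        K ∩ minSet A.1 ⊆ uSet (K ∩ minSet B.1)

/-- `Z` is union complete. -/
def UnionComplete (Z : SubsetSystem) : Prop :=
  ∀ (P : Type) [PartialOrder P], ∀ S ∈ Z.Z ↥(Z.Z P), (⋃ D ∈ S, D.1) ∈ Z.Z P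

/-- `Z` has the finite family union property. -/
def FFUP (Z : SubsetSystem) : Prop :=
  ∀ (P : Type) [PartialOrder P], ∀ (n : ℕ) (S : Fin n → Set (FinP P)),
    (∀ i, S i ∈ Z.Z (FinP P)) →
    {A : FinP P | ∃ g : Fin n → FinP P, (∀ i, g i ∈ S i) ∧ A.1 = ⋃ i, (g i).1} ∈
      Z.Z (FinP P)

/-- `Z` has property M. -/
def PropM (Z : SubsetSystem) : Prop :=
  ∀ (P : Type) [PartialOrder P], ∀ A : FinP P, {B : FinP P | A.1 ⊆ B.1} ∈ Z.Z (FinP P)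

/-- The lower topology `ω(P)`, generated by the complements of principal filters. -/
def lowerTop (P : Type) [PartialOrder P] : TopologicalSpace P :=
  TopologicalSpace.generateFrom {s | ∃ a : P, s = (Set.Ici a)ᶜ}

/-- The relative cut `E^δ|_A`. -/
def cutIn {P : Type} [PartialOrder P] (E A : Set P) : Set P :=
  {p ∈ A | ∀ m ∈ upperBounds E ∩ A, p ≤ m}

/-- `Z` is subset hereditary. -/
def SubsetHered (Z : SubsetSystem) : Prop :=
  ∀ (P : Type) [PartialOrder P] (Q : Type) [PartialOrder Q] (f : P → Q),
    (∀ x y : P, f x ≤ f y ↔ x ≤ y) → ∀ D : Set P, (D ∈ Z.Z P ↔ f '' D ∈ Z.Z Q)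

/-- The `Z`-Scott topology on `P` is lower hereditary. -/
def LowerHered (Z : SubsetSystem) (P : Type) [PartialOrder P] : Prop :=
  ∀ A ∈ GammaZ Z P,
    GammaZ Z ↥A = {C : Set ↥A | ∃ B ∈ GammaZ Z P, C = Subtype.val ⁻¹' B}

/-- `x ≺_Z y` (the `Z`-beneath relation). -/
def beneathZ (Z : SubsetSystem) {P : Type} [PartialOrder P] (x y : P) : Prop :=
  ∀ A ∈ GammaZ Z P, y ∈ cutOp A → x ∈ A

/-- `P` is `δ_Z`-continuous. -/
def DeltaZCont (Z : SubsetSystem) (P : Type) [PartialOrder P] : Prop :=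
  ∀ a : P, a ∈ cutOp {m | beneathZ Z m a}

/-- `k_Z(L)`: the set of `Z`-compact elements. -/
def kZ (Z : SubsetSystem) (L : Type) [PartialOrder L] : Set L :=
  {x | beneathZ Z x x}

theorem GammaZ_isLowerSet (Z : SubsetSystem) {P : Type} [PartialOrder P] {A : Set P}
    (hA : A ∈ GammaZ Z P) : IsLowerSet A := by
  intro a b hba ha
  refine hA {a} (Z.singleton_mem P a) (singleton_subset_iff.2 ha) ?_
  intro u hu
  exact hba.trans (hu rfl)

theorem Iic_mem_GammaZ (Z : SubsetSystem) {P : Type} [PartialOrder P] (p : P) :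
    Set.Iic p ∈ GammaZ Z P :=
  fun _ _ hS _ hx => hx fun _ hs => hS hs

theorem sUnion_mem_GammaZ (Z : SubsetSystem) {P : Type} [PartialOrder P]
    {𝒜 : Set ↥(GammaZ Z P)} (h𝒜 : 𝒜 ∈ GammaZ Z ↥(GammaZ Z P)) :
    {x | ∃ A ∈ 𝒜, x ∈ A.1} ∈ GammaZ Z P := by
  intro S hS hSA x hx
  let f : P → ↥(GammaZ Z P) := fun p => ⟨Set.Iic p, Iic_mem_GammaZ Z p⟩
  have hf : Monotone f := fun a b hab => Set.Iic_subset_Iic.2 hab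
  have hsub : f '' S ⊆ 𝒜 := by
    rintro _ ⟨s, hs, rfl⟩
    obtain ⟨A, hA, hsA⟩ := hSA hs
    exact GammaZ_isLowerSet Z h𝒜
      (show f s ≤ A from fun y hy => GammaZ_isLowerSet Z A.2 hy hsA) hA
  refine ⟨f x, h𝒜 _ (Z.image_mem _ _ f hf S hS) hsub ?_, le_refl x⟩
  intro B hB
  have hSB : S ⊆ B.1 := fun s hs => hB (mem_image_of_mem f hs) (le_refl s)
  exact fun y hy => GammaZ_isLowerSet Z B.2 hy (B.2 S hS hSB hx)

theorem Iic_mem_kZ (Z : SubsetSystem) {P : Type} [PartialOrder P] (p : P) :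
    (⟨Set.Iic p, Iic_mem_GammaZ Z p⟩ : ↥(GammaZ Z P)) ∈ kZ Z ↥(GammaZ Z P) := by
  intro 𝒜 h𝒜 hp
  have hle : (⟨Set.Iic p, Iic_mem_GammaZ Z p⟩ : ↥(GammaZ Z P)) ≤
      ⟨_, sUnion_mem_GammaZ Z h𝒜⟩ := hp fun A hA x hx => ⟨A, hA, hx⟩
  obtain ⟨A, hA, hpA⟩ := hle (le_refl p)
  exact GammaZ_isLowerSet Z h𝒜
    (show _ ≤ A from fun y hy => GammaZ_isLowerSet Z A.2 hy hpA) hA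

theorem SigmaZCont.monotone {Z : SubsetSystem} {P Q : Type} [PartialOrder P] [PartialOrder Q]
    {f : P → Q} (hf : SigmaZCont Z f) : Monotone f := fun a b hab =>
  GammaZ_isLowerSet Z (hf _ (Iic_mem_GammaZ Z (f b))) hab (le_refl (f b))

theorem isLUB_of_sigmaZCont {Z : SubsetSystem} {P : Type} [PartialOrder P]
    {ξ : ↥(kZ Z ↥(GammaZ Z P)) → P} (hξ : SigmaZCont Z ξ)
    (hp : ∀ (p : P) (A : ↥(kZ Z ↥(GammaZ Z P))), A.1.1 = Set.Iic p → ξ A = p)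
    (A : ↥(kZ Z ↥(GammaZ Z P))) : IsLUB A.1.1 (ξ A) := by
  constructor
  · intro p hpA
    have h := hξ.monotone (show (⟨_, Iic_mem_kZ Z p⟩ : ↥(kZ Z ↥(GammaZ Z P))) ≤ A from
      fun y hy => GammaZ_isLowerSet Z A.1.2 hy hpA)
    rwa [hp p ⟨_, Iic_mem_kZ Z p⟩ rfl] at h
  · intro u hu
    have h := hξ.monotone (show A ≤ (⟨_, Iic_mem_kZ Z u⟩ : ↥(kZ Z ↥(GammaZ Z P))) from
      fun y hy => hu hy)
    rwa [hp u ⟨_, Iic_mem_kZ Z u⟩ rfl] at h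

theorem sigmaZCont_of_isLUB {Z : SubsetSystem} {P : Type} [PartialOrder P]
    {ξ : ↥(kZ Z ↥(GammaZ Z P)) → P} (hξ : ∀ A, IsLUB A.1.1 (ξ A)) : SigmaZCont Z ξ := by
  have hmono : Monotone ξ := fun A B hAB => (hξ A).2 fun x hx => (hξ B).1 (hAB hx)
  intro B hB 𝒮 h𝒮 hsub A hA
  refine hB _ (Z.image_mem _ _ ξ hmono 𝒮 h𝒮) (image_subset_iff.2 hsub) ?_
  intro u hu
  -- `↓u` is an element of `δ(P)` that bounds `𝒮`, hence it bounds `A`.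
  have hle : A ≤ (⟨_, Iic_mem_kZ Z u⟩ : ↥(kZ Z ↥(GammaZ Z P))) := by
    apply hA
    intro C hC x hx
    exact ((hξ C).1 hx).trans (hu (mem_image_of_mem ξ hC))
  exact (hξ A).2 fun x hx => hle hx

/-- with `δ(P) = k_Z(Γ^Z(P))`, every principal ideal `↓p` belongs to
`δ(P)`; there is a `σ^Z`-continuous `ξ : δ(P) → P` with `ξ(↓p) = p` for all `p` iff
`P` is a `δ`cpo; and in that case `ξ(A) = sup A` for every `A ∈ δ(P)`. -/
theorem stmt19 (Z : SubsetSystem) (P : Type) [PartialOrder P] :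
    (∀ p : P, ∃ h : Set.Iic p ∈ GammaZ Z P,
        (⟨Set.Iic p, h⟩ : ↥(GammaZ Z P)) ∈ kZ Z ↥(GammaZ Z P)) ∧
    ((∃ ξ : ↥(kZ Z ↥(GammaZ Z P)) → P, SigmaZCont Z ξ ∧
        ∀ (p : P) (A : ↥(kZ Z ↥(GammaZ Z P))), A.1.1 = Set.Iic p → ξ A = p) ↔
      ∀ A : ↥(kZ Z ↥(GammaZ Z P)), ∃ s : P, IsLUB A.1.1 s) ∧
    (∀ ξ : ↥(kZ Z ↥(GammaZ Z P)) → P, SigmaZCont Z ξ →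
      (∀ (p : P) (A : ↥(kZ Z ↥(GammaZ Z P))), A.1.1 = Set.Iic p → ξ A = p) →
      ∀ A : ↥(kZ Z ↥(GammaZ Z P)), IsLUB A.1.1 (ξ A)) := by
  refine ⟨fun p => ⟨Iic_mem_GammaZ Z p, Iic_mem_kZ Z p⟩, ⟨?_, ?_⟩,
    fun ξ hξ hp A => isLUB_of_sigmaZCont hξ hp A⟩
  · rintro ⟨ξ, hξ, hp⟩ A
    exact ⟨ξ A, isLUB_of_sigmaZCont hξ hp A⟩
  · intro h
    choose ξ hξ using h
    refine ⟨ξ, sigmaZCont_of_isLUB hξ, fun p A hA => ?_⟩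
    have hA' := hξ A
    rw [hA] at hA'
    exact hA'.unique isLUB_Iic
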